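/- Under the hypotheses of the compatibility theorem (Ψ·R = I, Ψ̃ = Ψ₁ + Δt·Ψ̇, with blocks K₀^{Δt}, Bᵢ^{Δt} of Ψ̃·R and K₀, Bᵢ of Ψ̇·R), advancing per the discrete-time bilinear model equals one explicit Euler step of the continuous-time bilinear model: for every z ∈ ℝ^{n_o} and every u ∈ ℝ^{n_c}, (K₀^{Δt} + Σ_{i=1}^{n_c} uᵢ Bᵢ^{Δt}) z = z + Δt (K₀ + Σ_{i=1}^{n_c} uᵢ Bᵢ) z. -/

import Mathlib

/-!
Since `Ψ * R = 1`, its top block row gives `Ψ₁ * R = [I | 0 | ⋯ | 0]`, hence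
`Ψtilde * R = [I | 0 | ⋯ | 0] + Δt • (Ψdot * R)`. Comparing blocks, `Kdt = 1 + Δt • K₀` and
`Bdt i = Δt • B i`; the Euler-step identity follows by linearity.
-/

open Matrix

/-- Under the hypotheses of the discrete/continuous EDMD compatibility theorem,
advancing by the discrete-time bilinear model equals one explicit Euler step of
the continuous-time bilinear model:
`(K₀^{Δt} + Σᵢ uᵢ Bᵢ^{Δt}) z = z + Δt (K₀ + Σᵢ uᵢ Bᵢ) z`. -/
theorem edmd_discrete_step_is_euler_step {no nc m : ℕ}
    (Ψ₁ : Matrix (Fin no) (Fin m) ℝ)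
    (Ψ₂ : Matrix (Fin nc × Fin no) (Fin m) ℝ)
    (R : Matrix (Fin m) (Fin no ⊕ Fin nc × Fin no) ℝ)
    (hR : Matrix.fromRows Ψ₁ Ψ₂ * R = 1)
    (Ψdot : Matrix (Fin no) (Fin m) ℝ)
    (Δt : ℝ) (hΔt : 0 < Δt)
    (Ψtilde : Matrix (Fin no) (Fin m) ℝ)
    (hΨtilde : Ψtilde = Ψ₁ + Δt • Ψdot)
    (Kdt : Matrix (Fin no) (Fin no) ℝ)
    (hKdt : ∀ a b, Kdt a b = (Ψtilde * R) a (Sum.inl b))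
    (Bdt : Fin nc → Matrix (Fin no) (Fin no) ℝ)
    (hBdt : ∀ i a b, Bdt i a b = (Ψtilde * R) a (Sum.inr (i, b)))
    (K₀ : Matrix (Fin no) (Fin no) ℝ)
    (hK₀ : ∀ a b, K₀ a b = (Ψdot * R) a (Sum.inl b))
    (B : Fin nc → Matrix (Fin no) (Fin no) ℝ)
    (hB : ∀ i a b, B i a b = (Ψdot * R) a (Sum.inr (i, b)))
    (z : Fin no → ℝ) (u : Fin nc → ℝ) :
    (Kdt + ∑ i, u i • Bdt i) *ᵥ z =
      z + Δt • ((K₀ + ∑ i, u i • B i) *ᵥ z) := by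
  -- The top block row of `Ψ * R = 1` reads `Ψ₁ * R = [I | 0 | ⋯ | 0]`.
  have hΨ₁ (a : Fin no) (c : Fin no ⊕ Fin nc × Fin no) :
      (Ψ₁ * R) a c = (1 : Matrix (Fin no ⊕ Fin nc × Fin no) _ ℝ) (Sum.inl a) c := by
    rw [← hR, Matrix.fromRows_mul, Matrix.fromRows_apply_inl]
  have hK : Kdt = 1 + Δt • K₀ := by
    ext a b
    rw [hKdt, hΨtilde, Matrix.add_mul, Matrix.smul_mul, Matrix.add_apply, hΨ₁]
    simp [hK₀, Matrix.one_apply]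
  have hBeq (i : Fin nc) : Bdt i = Δt • B i := by
    ext a b
    rw [hBdt, hΨtilde, Matrix.add_mul, Matrix.smul_mul, Matrix.add_apply, hΨ₁]
    simp [hB]
  have hsum : Kdt + ∑ i, u i • Bdt i = 1 + Δt • (K₀ + ∑ i, u i • B i) := by
    simp only [hK, hBeq, smul_add, Finset.smul_sum, smul_comm Δt, add_assoc]
  rw [hsum, Matrix.add_mulVec, Matrix.one_mulVec, Matrix.smul_mulVec]
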